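/- arXiv:1512.00779 — 3 statements merged into one kernel-verified Lean document; each statement's English description precedes it below -/
import Mathlib

section
/- For every positive integer k, there exists a set of k dipole words, each of length 18k+42, that attractively encodes the canonical unsigned k-glue function (i.e., a length-(18k+42) dipole code attractively encoding it). -/
/-- The alphabet Σ = {0, 1, ⋄} of dipole letters. -/
inductive Dip : Type
  | zero : Dip
  | one : Dip
  | blank : Dip
  deriving DecidableEq

open Dip

/-- The force between a pair of letters: 1 if {x,y} = {0,1}, -1 if x = y ∈ {0,1}, 0 otherwise. -/
def lf : Dip → Dip → ℤ
  | zero, one => 1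
  | one, zero => 1
  | zero, zero => -1
  | one, one => -1
  | _, _ => 0

/-- The force between a pair of equal-length words: the sum of letterwise forces. -/
def force (X Y : List Dip) : ℤ := (List.zipWith lf X Y).sum

/-- The length-`i` suffix of a word. -/
def sufx (X : List Dip) (i : ℕ) : List Dip := X.drop (X.length - i)

/-- A pair of equal-length words `X`, `Y` is aligned provided `f(X,Y) ≤ 0` and all proper
prefix/suffix overlaps with `Y` and its reverse have non-positive force. -/
def aligned (X Y : List Dip) : Prop :=
  force X Y ≤ 0 ∧
    ∀ A ∈ [Y, Y.reverse], ∀ i, 1 ≤ i → i ≤ X.length - 1 →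
      force (X.take i) (sufx A i) ≤ 0 ∧ force (sufx X i) (A.take i) ≤ 0

/-- The words `W 1, …, W k` attractively encode the `k`-glue function `g`: every pair is
aligned and `f(Wᵢ, Rev(Wⱼ)) > 0` iff `g i j > 0`. -/
def attEncodes (k : ℕ) (W : ℕ → List Dip) (g : ℕ → ℕ → ℤ) : Prop :=
  (∀ i ∈ Finset.Icc 1 k, ∀ j ∈ Finset.Icc 1 k, aligned (W i) (W j)) ∧
    ∀ i ∈ Finset.Icc 1 k, ∀ j ∈ Finset.Icc 1 k,
      (0 < force (W i) ((W j).reverse) ↔ 0 < g i j)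

/-- The canonical unsigned `k`-glue function: `g i j = 1` if `i = j` and `0` otherwise. -/
def unsignedGlue (i j : ℕ) : ℤ := if i = j then 1 else 0

/-!
Number the positions of a word of even length symmetrically, so that reversal is `u ↦ -1 - u`. The
`i`-th word has a `0` at `-i`, a `1` at `i - 1`, and further `1`s on a frame common to all words.
As every word has a single `0`, at most two positions of an overlap attract, and two shared frame
letters make up for them. The frame is such that two of its letters coincide in every overlap where
a `0` meets a `1`, except for full overlaps with a reversed word: the frame is disjoint from its
mirror image, and the `0` and `1` at `-i` and `i - 1` meet a mirrored `1` and `0` just when `i = j`.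
-/

namespace DipoleCode

open Finset

section Windows

variable (F G : ℤ → Dip) (a b : ℤ)

/-- The factor of length `l` of the bi-infinite word `F` that starts at position `a`. Words, their
prefixes and suffixes, and their reversals are all of this form. -/
def window (l : ℕ) : List Dip := (List.range l).map fun x : ℕ => F (a + x)

theorem length_window (l : ℕ) : (window F a l).length = l := by
  simp [window]

theorem take_window {l n : ℕ} (h : l ≤ n) : (window F a n).take l = window F a l := by
  rw [window, ← List.map_take, List.take_range, min_eq_left h, window]

theorem sufx_window {l n : ℕ} (h : l ≤ n) :
    sufx (window F a n) l = window F (a + n - l) l := by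
  apply List.ext_getElem
  · simp only [sufx, window, List.length_drop, List.length_map, List.length_range]
    omega
  · intro x _ _
    simp only [sufx, window, List.length_map, List.length_range, List.getElem_drop,
      List.getElem_map, List.getElem_range]
    congr 1
    omega

theorem reverse_window (l : ℕ) :
    (window F a l).reverse = window (fun u => F (-1 - u)) (-a - l) l := by
  apply List.ext_getElem
  · simp [window]
  · intro x hx _
    simp only [window, List.length_reverse, List.length_map, List.length_range] at hx
    simp only [window, List.getElem_reverse, List.length_map, List.length_range,
      List.getElem_map, List.getElem_range]
    congr 1
    omega

theorem force_window (l : ℕ) :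
    force (window F a l) (window G b l) =
      ∑ u ∈ Ico a (a + l), lf (F u) (G (u + (b - a))) := by
  have himage : Ico a (a + l) = (range l).image fun x : ℕ => a + (x : ℤ) := by
    ext u
    simp only [mem_Ico, mem_image, mem_range]
    constructor
    · intro hu
      exact ⟨(u - a).toNat, by omega⟩
    · rintro ⟨x, hx, rfl⟩
      omega
  rw [himage, sum_image fun x _ y _ h => by simpa using h, force, window, window,
    List.zipWith_map, List.zipWith_self, ← List.sum_toFinset _ List.nodup_range,
    List.toFinset_range]
  refine sum_congr rfl fun x _ => ?_
  congr 2
  ring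

end Windows

section Force

theorem lf_eq_one_iff {x y : Dip} : lf x y = 1 ↔ x = zero ∧ y = one ∨ x = one ∧ y = zero := by
  cases x <;> cases y <;> simp [lf]

variable {ι : Type*} {S : Finset ι} {f g : ι → Dip}

theorem sum_lf_eq_card_sub_card :
    ∑ u ∈ S, lf (f u) (g u) =
      (#{u ∈ S | lf (f u) (g u) = 1} : ℤ) - #{u ∈ S | lf (f u) (g u) = -1} := by
  rw [card_filter, card_filter, Nat.cast_sum, Nat.cast_sum, ← sum_sub_distrib]
  refine sum_congr rfl fun u _ => ?_
  cases f u <;> cases g u <;> rfl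

theorem card_lf_eq_one_le_two (hf : (f ⁻¹' {zero}).Subsingleton)
    (hg : (g ⁻¹' {zero}).Subsingleton) : #{u ∈ S | lf (f u) (g u) = 1} ≤ 2 := by
  classical
  have hsub : {u ∈ S | lf (f u) (g u) = 1} ⊆ {u ∈ S | f u = zero} ∪ {u ∈ S | g u = zero} := by
    intro u
    simp only [mem_filter, mem_union, lf_eq_one_iff]
    tauto
  have hf_card : #{u ∈ S | f u = zero} ≤ 1 :=
    card_le_one.2 fun x hx y hy => hf (mem_filter.1 hx).2 (mem_filter.1 hy).2
  have hg_card : #{u ∈ S | g u = zero} ≤ 1 :=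
    card_le_one.2 fun x hx y hy => hg (mem_filter.1 hx).2 (mem_filter.1 hy).2
  calc #{u ∈ S | lf (f u) (g u) = 1}
      ≤ #({u ∈ S | f u = zero} ∪ {u ∈ S | g u = zero}) := card_le_card hsub
    _ ≤ #{u ∈ S | f u = zero} + #{u ∈ S | g u = zero} := card_union_le _ _
    _ ≤ 2 := by omega

theorem sum_lf_nonpos (hf : (f ⁻¹' {zero}).Subsingleton) (hg : (g ⁻¹' {zero}).Subsingleton)
    (h : ∀ u ∈ S, lf (f u) (g u) = 1 → {u ∈ S | f u = one ∧ g u = one}.Nontrivial) :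
    ∑ u ∈ S, lf (f u) (g u) ≤ 0 := by
  rw [sum_lf_eq_card_sub_card, sub_nonpos, Nat.cast_le]
  obtain hempty | ⟨u, hu⟩ := {u ∈ S | lf (f u) (g u) = 1}.eq_empty_or_nonempty
  · simp [hempty]
  obtain ⟨huS, hu⟩ := mem_filter.1 hu
  have hsub : {u ∈ S | f u = one ∧ g u = one} ⊆ {u ∈ S | lf (f u) (g u) = -1} :=
    monotone_filter_right S fun v _ hv => by rw [hv.1, hv.2]; rfl
  calc #{u ∈ S | lf (f u) (g u) = 1} ≤ 2 := card_lf_eq_one_le_two hf hg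
    _ ≤ #{u ∈ S | f u = one ∧ g u = one} := one_lt_card_iff_nontrivial.2 (h u huS hu)
    _ ≤ #{u ∈ S | lf (f u) (g u) = -1} := card_le_card hsub

end Force

section Frame

variable {k : ℕ}

/-- The positions of the letters `1` shared by all the words of the code. The lengths of the three
blocks make the sums and the differences of two elements cover the ranges of
`frame_reflection_nontrivial` and `frame_shift_nontrivial`. -/
noncomputable def frame (k : ℕ) : Finset ℤ :=
  {-(k + 1 : ℤ)} ∪ Icc (k + 1 : ℤ) (3 * k + 3) ∪ Icc (-(7 * k + 12) : ℤ) (-(3 * k + 5))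

theorem mem_frame {u : ℤ} :
    u ∈ frame k ↔ u = -(k + 1) ∨ (k + 1 ≤ u ∧ u ≤ 3 * k + 3) ∨
      (-(7 * k + 12) ≤ u ∧ u ≤ -(3 * k + 5)) := by
  simp only [frame, mem_union, mem_singleton, mem_Icc, or_assoc]

theorem exists_frame_add_eq {r : ℤ} (hne : r ≠ -1) (hl : -(8 * k + 12) ≤ r) (hr : r ≤ 3 * k + 2) :
    ∃ a ∈ frame k, ∃ b ∈ frame k, a ≠ b ∧ a + b = r := by
  suffices ∃ a, a ∈ frame k ∧ r - a ∈ frame k ∧ a ≠ r - a by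
    obtain ⟨a, ha, hb, hab⟩ := this
    exact ⟨a, ha, r - a, hb, hab, by ring⟩
  simp only [mem_frame]
  have hcases : r < -(6 * k + 11) ∨ (-(6 * k + 11) ≤ r ∧ r ≤ -2) ∨ (0 ≤ r ∧ r ≤ 2 * k + 2) ∨
      2 * k + 2 < r := by omega
  rcases hcases with h | h | h | h
  · exact ⟨-(3 * k + 5), by omega⟩
  · exact ⟨max (k + 1) (r + (3 * k + 5)), by omega⟩
  · exact ⟨-(k + 1), by omega⟩
  · exact ⟨k + 1, by omega⟩

theorem frame_reflection_nontrivial {r : ℤ} (hne : r ≠ -1) (hl : -(8 * k + 12) ≤ r)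
    (hr : r ≤ 3 * k + 2) : {u ∈ frame k | r - u ∈ frame k}.Nontrivial := by
  obtain ⟨a, ha, b, hb, hab, rfl⟩ := exists_frame_add_eq hne hl hr
  exact ⟨a, by simp [ha, hb], b, by simp [ha, hb], hab⟩

theorem exists_frame_shift {m : ℤ} (hm : |m| ≤ 7 * k + 11) :
    ∃ a, a ∈ frame k ∧ a + m ∈ frame k ∧ a + 1 ∈ frame k ∧ a + 1 + m ∈ frame k := by
  rw [abs_le] at hm
  simp only [mem_frame]
  have hcases : m < -(4 * k + 6) ∨ (-(4 * k + 6) ≤ m ∧ m < 0) ∨ (0 ≤ m ∧ m ≤ 4 * k + 6) ∨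
      4 * k + 6 < m := by omega
  rcases hcases with h | h | h | h
  · exact ⟨k + 1, by omega⟩
  · exact ⟨-(7 * k + 12) - m, by omega⟩
  · exact ⟨-(7 * k + 12), by omega⟩
  · exact ⟨k + 1 - m, by omega⟩

theorem frame_shift_nontrivial {m : ℤ} (hm : |m| ≤ 7 * k + 11) :
    {u ∈ frame k | u + m ∈ frame k}.Nontrivial := by
  obtain ⟨a, ha, ham, hb, hbm⟩ := exists_frame_shift hm
  exact ⟨a, by simp [ha, ham], a + 1, by simp [hb, hbm], by simp⟩

end Frame

section Letters

variable {k i j : ℕ}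

/-- The letter at position `u` of the `i`-th word of the code, continued by blanks to all of `ℤ`. -/
noncomputable def letter (k i : ℕ) (u : ℤ) : Dip :=
  if u = -i then zero else if u = i - 1 ∨ u ∈ frame k then one else blank

theorem letter_eq_zero_iff {u : ℤ} : letter k i u = zero ↔ u = -i := by
  unfold letter
  split_ifs <;> simp_all

theorem letter_eq_one_of_mem_frame (hi : i ∈ Icc 1 k) {u : ℤ} (hu : u ∈ frame k) :
    letter k i u = one := by
  have hne : u ≠ -i := by
    rw [mem_frame] at hu
    rw [mem_Icc] at hi
    omega
  rw [letter, if_neg hne, if_pos (.inr hu)]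

theorem mem_Icc_of_letter_eq_one (hi : i ∈ Icc 1 k) {u : ℤ} (hu : letter k i u = one) :
    u ∈ Icc (-(7 * k + 12) : ℤ) (3 * k + 3) := by
  rw [mem_Icc] at hi ⊢
  unfold letter at hu
  split_ifs at hu with _ h
  rw [mem_frame] at h
  omega

theorem bounds_of_lf_letter_eq_one (hi : i ∈ Icc 1 k) (hj : j ∈ Icc 1 k) {u w : ℤ}
    (h : lf (letter k i u) (letter k j w) = 1) :
    |w - u| ≤ 7 * k + 11 ∧ -(8 * k + 12) ≤ u + w ∧ u + w ≤ 3 * k + 2 := by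
  rw [abs_le]
  rcases lf_eq_one_iff.1 h with ⟨hu, hw⟩ | ⟨hu, hw⟩
  · have hw := mem_Icc.1 (mem_Icc_of_letter_eq_one hj hw)
    rw [letter_eq_zero_iff] at hu
    rw [mem_Icc] at hi
    omega
  · have hu := mem_Icc.1 (mem_Icc_of_letter_eq_one hi hu)
    rw [letter_eq_zero_iff] at hw
    rw [mem_Icc] at hj
    omega

theorem sum_lf_letter_nonpos (hi : i ∈ Icc 1 k) (hj : j ∈ Icc 1 k) {S : Finset ℤ} {σ : ℤ → ℤ}
    (hσ : σ.Injective) (hS : {u ∈ frame k | σ u ∈ frame k} ⊆ S)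
    (h : ∀ u, lf (letter k i u) (letter k j (σ u)) = 1 →
      {u ∈ frame k | σ u ∈ frame k}.Nontrivial) :
    ∑ u ∈ S, lf (letter k i u) (letter k j (σ u)) ≤ 0 := by
  refine sum_lf_nonpos (fun u hu v hv => ?_) (fun u hu v hv => hσ ?_) fun u _ hu => ?_
  · exact (letter_eq_zero_iff.1 hu).trans (letter_eq_zero_iff.1 hv).symm
  · exact (letter_eq_zero_iff.1 hu).trans (letter_eq_zero_iff.1 hv).symm
  · refine (h u hu).mono fun v hv => mem_filter.2 ⟨hS hv, ?_⟩
    obtain ⟨hv, hσv⟩ := mem_filter.1 hv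
    exact ⟨letter_eq_one_of_mem_frame hi hv, letter_eq_one_of_mem_frame hj hσv⟩

theorem lf_letter_reflect (hi : i ∈ Icc 1 k) (hj : j ∈ Icc 1 k) (u : ℤ) :
    lf (letter k i u) (letter k j (-1 - u)) =
      if i = j ∧ (u = -i ∨ u = i - 1) then 1 else 0 := by
  rw [mem_Icc] at hi hj
  unfold letter
  simp only [mem_frame]
  split_ifs <;> first | rfl | omega

end Letters

section Code

variable {k n i j : ℕ}

/-- The `i`-th word of the code of length `2 * n` on `k` words. -/
noncomputable def word (k n i : ℕ) : List Dip := window (letter k i) (-n) (2 * n)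

theorem length_word : (word k n i).length = 2 * n := length_window _ _ _

theorem word_reverse :
    (word k n i).reverse = window (fun u => letter k i (-1 - u)) (-n) (2 * n) := by
  rw [word, reverse_window]
  congr 1
  push_cast
  ring

theorem force_window_letter_nonpos (hi : i ∈ Icc 1 k) (hj : j ∈ Icc 1 k) {a b : ℤ} {l : ℕ}
    (hl : ∀ u ∈ frame k, u + (b - a) ∈ frame k → u ∈ Ico a (a + l)) :
    force (window (letter k i) a l) (window (letter k j) b l) ≤ 0 := by
  rw [force_window]
  refine sum_lf_letter_nonpos hi hj (add_left_injective _) (fun u hu => ?_) fun u hu =>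
    frame_shift_nontrivial ?_
  · exact hl u (mem_filter.1 hu).1 (mem_filter.1 hu).2
  · simpa using (bounds_of_lf_letter_eq_one hi hj hu).1

theorem force_window_letter_reflect_nonpos (hi : i ∈ Icc 1 k) (hj : j ∈ Icc 1 k) {a b : ℤ} {l : ℕ}
    (hab : a ≠ b) (hl : ∀ u ∈ frame k, a - b - 1 - u ∈ frame k → u ∈ Ico a (a + l)) :
    force (window (letter k i) a l) (window (fun u => letter k j (-1 - u)) b l) ≤ 0 := by
  have hreflect (u : ℤ) : -1 - (u + (b - a)) = a - b - 1 - u := by ring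
  simp only [force_window, hreflect]
  refine sum_lf_letter_nonpos hi hj sub_right_injective (fun u hu => ?_) fun u hu => ?_
  · exact hl u (mem_filter.1 hu).1 (mem_filter.1 hu).2
  · obtain ⟨-, hlower, hupper⟩ := bounds_of_lf_letter_eq_one hi hj hu
    exact frame_reflection_nontrivial (by omega) (by omega) (by omega)

theorem aligned_word (hn : 7 * k + 12 ≤ n) (hi : i ∈ Icc 1 k) (hj : j ∈ Icc 1 k) :
    aligned (word k n i) (word k n j) := by
  have hframe {u : ℤ} (hu : u ∈ frame k) : -n ≤ u ∧ u < n := by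
    rw [mem_frame] at hu
    omega
  refine ⟨force_window_letter_nonpos hi hj fun u hu _ => ?_, fun A hA l _ hl => ?_⟩
  · have := hframe hu
    exact mem_Ico.2 (by omega)
  rw [length_word] at hl
  have hle : l ≤ 2 * n := by omega
  simp only [List.mem_cons, List.not_mem_nil, or_false] at hA
  rcases hA with rfl | rfl
  · rw [word, word, take_window _ _ hle, take_window _ _ hle, sufx_window _ _ hle,
      sufx_window _ _ hle]
    constructor <;> refine force_window_letter_nonpos hi hj fun u hu hu' => mem_Ico.2 ?_ <;>
      have := hframe hu <;> have := hframe hu' <;> omega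
  · rw [word_reverse, word, take_window _ _ hle, take_window _ _ hle, sufx_window _ _ hle,
      sufx_window _ _ hle]
    constructor <;>
      refine force_window_letter_reflect_nonpos hi hj (by omega) fun u hu hu' => mem_Ico.2 ?_ <;>
      have := hframe hu <;> have := hframe hu' <;> omega

theorem force_word_reverse_pos_iff (hn : k ≤ n) (hi : i ∈ Icc 1 k) (hj : j ∈ Icc 1 k) :
    0 < force (word k n i) (word k n j).reverse ↔ i = j := by
  rw [word_reverse, word, force_window]
  simp only [sub_self, add_zero, lf_letter_reflect hi hj]
  constructor
  · intro hpos
    by_contra hij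
    simp [hij] at hpos
  · rintro rfl
    refine sum_pos' (fun u _ => by positivity) ⟨-i, mem_Ico.2 ?_, by simp⟩
    rw [mem_Icc] at hi
    omega

end Code

end DipoleCode

open DipoleCode in
theorem stmt1_general (k n : ℕ) (hn : 7 * k + 12 ≤ n) :
    ∃ W : ℕ → List Dip,
      (∀ i ∈ Finset.Icc 1 k, (W i).length = 2 * n) ∧ attEncodes k W unsignedGlue := by
  refine ⟨word k n, fun _ _ => length_word, fun i hi j hj => aligned_word hn hi hj,
    fun i hi j hj => ?_⟩
  rw [force_word_reverse_pos_iff (by omega) hi hj, unsignedGlue]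
  split_ifs with hij <;> simp [hij]

/-- For every positive integer `k`, there is a set of `k` dipole words, each of length
`18k+42`, that attractively encodes the canonical unsigned `k`-glue function. -/
theorem stmt1 (k : ℕ) (hk : 0 < k) :
    ∃ W : ℕ → List Dip,
      (∀ i ∈ Finset.Icc 1 k, (W i).length = 18 * k + 42) ∧
      attEncodes k W unsignedGlue := by
  obtain ⟨W, hlength, hW⟩ := stmt1_general k (9 * k + 21) (by omega)
  exact ⟨W, fun i hi => by rw [hlength i hi]; ring, hW⟩
end

section
/- For every positive integer k and every k-glue function g whose bond graph is bipartite, there exists a set of k dipole words, each of length 3k+14, that attractively encodes g. -/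
open Dip

/-!
Give the letters `0`, `1`, `⋄` the charges `1`, `-1`, `0`, so that a force is minus a sum of
products of charges. Sliding `X` along `Y` or along its reversal places position `t` of `X` on
position `s + t` or `s - t` of `Y`, so alignment says that these sums of products are nonnegative
for all translations and for all reflections but one, `s = |Y| - 1`, which is the reversal bond
itself.

One colour class gets probes, which carry three charges `1`; the other gets panels, which carry a
single charge `-1` inside long runs of charges `1`. When a probe meets the `-1` of a panel, another
of its charges meets a run, except under the reversal bond: there the compensating charge falls on
the slot of the panel that belongs to the vertex of the probe, and this slot is blank exactly when
the two vertices are bonded. Two panels lose at most `2` from their letters `1`, and their runs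
overlap in two positions whenever this loss can occur.
-/

/-- The charge of a letter, normalised so that the force between two letters is minus the product
of their charges. -/
def Dip.charge : Dip → ℤ
  | zero => 1
  | one => -1
  | blank => 0

theorem Dip.abs_charge_le_one (a : Dip) : |a.charge| ≤ 1 := by
  cases a <;> decide

theorem lf_eq_neg_charge_mul_charge (a b : Dip) : lf a b = -(a.charge * b.charge) := by
  cases a <;> cases b <;> rfl

theorem lf_comm (a b : Dip) : lf a b = lf b a := by
  rw [lf_eq_neg_charge_mul_charge, lf_eq_neg_charge_mul_charge, mul_comm]

theorem force_comm (X Y : List Dip) : force X Y = force Y X := by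
  rw [force, force, List.zipWith_comm_of_comm lf_comm]

theorem force_take_sufx (X Y : List Dip) (i : ℕ) :
    force (X.take i) (sufx Y i) = force X (sufx Y i) := by
  have hlen : (sufx Y i).length ≤ i := by
    rw [sufx, List.length_drop]
    omega
  have hzip : (List.zipWith lf X (sufx Y i)).length ≤ i :=
    List.length_zipWith.trans_le ((min_le_right _ _).trans hlen)
  rw [force, force, ← List.take_of_length_le hzip, List.take_zipWith, List.take_of_length_le hlen]

theorem force_eq_neg_sum_range (X Y : List Dip) :
    force X Y =
      -∑ t ∈ Finset.range X.length, (X.getD t blank).charge * (Y.getD t blank).charge := by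
  induction X generalizing Y with
  | nil => rfl
  | cons a X ih =>
    cases Y with
    | nil => simp [force, charge]
    | cons b Y =>
      have hcons : force (a :: X) (b :: Y) = lf a b + force X Y := List.sum_cons
      rw [hcons, lf_eq_neg_charge_mul_charge, ih, List.length_cons, Finset.sum_range_succ', neg_add,
        add_comm]
      simp only [List.getD_cons_zero, List.getD_cons_succ]

/-- The charge at position `t` of the word `X`, positions being counted from `0`; it vanishes
outside `0 ≤ t < |X|`. Integer positions keep reflections and translations total. -/
def chargeAt (X : List Dip) : ℤ → ℤ
  | .ofNat t => (X.getD t blank).charge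
  | .negSucc _ => 0

theorem chargeAt_natCast (X : List Dip) (t : ℕ) : chargeAt X t = (X.getD t blank).charge := rfl

theorem chargeAt_eq_zero {X : List Dip} {t : ℤ} (ht : t < 0 ∨ X.length ≤ t) :
    chargeAt X t = 0 := by
  rcases t with t | t
  · have hlen : X.length ≤ t := by simpa using ht.resolve_left (Int.natCast_nonneg t).not_gt
    rw [Int.ofNat_eq_natCast, chargeAt_natCast, List.getD_eq_default _ _ hlen, charge]
  · rfl

theorem abs_chargeAt_le_one (X : List Dip) (t : ℤ) : |chargeAt X t| ≤ 1 := by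
  rcases t with t | t
  · exact abs_charge_le_one _
  · simp [chargeAt]

theorem chargeAt_reverse (X : List Dip) (t : ℤ) :
    chargeAt X.reverse t = chargeAt X (X.length - 1 - t) := by
  by_cases hout : t < 0 ∨ X.length ≤ t
  · rw [chargeAt_eq_zero (by rwa [List.length_reverse]), chargeAt_eq_zero (by omega)]
  lift t to ℕ using by omega
  rw [show (X.length - 1 - t : ℤ) = (X.length - 1 - t : ℕ) by omega, chargeAt_natCast,
    chargeAt_natCast, List.getD_reverse _ (by omega)]

theorem chargeAt_drop_natCast (X : List Dip) (m t : ℕ) :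
    chargeAt (X.drop m) t = chargeAt X (m + t) := by
  rw [← Nat.cast_add, chargeAt_natCast, chargeAt_natCast]
  simp only [List.getD_eq_getElem?_getD, List.getElem?_drop]

theorem chargeAt_map_range {n : ℕ} {f : ℕ → Dip} {t : ℤ} (h₀ : 0 ≤ t) (hn : t < n) :
    chargeAt ((List.range n).map f) t = (f t.toNat).charge := by
  lift t to ℕ using h₀
  rw [chargeAt_natCast, List.getD_eq_getElem _ _ (by simpa using hn)]
  simp

/-- The total product of the charges that face each other when position `t` of `X` is placed on
position `σ t` of `Y`. The sum has only finitely many nonzero terms. -/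
noncomputable def overlap (X Y : List Dip) (σ : ℤ ≃ ℤ) : ℤ :=
  ∑' t, chargeAt X t * chargeAt Y (σ t)

theorem overlap_comm (X Y : List Dip) (σ : ℤ ≃ ℤ) : overlap X Y σ = overlap Y X σ.symm := by
  rw [overlap, overlap, ← σ.tsum_eq fun t => chargeAt Y t * chargeAt X (σ.symm t)]
  simp only [Equiv.symm_apply_apply, mul_comm]

theorem overlap_eq_sum_range (X Y : List Dip) (σ : ℤ ≃ ℤ) :
    overlap X Y σ = ∑ t ∈ Finset.range X.length, chargeAt X t * chargeAt Y (σ t) := by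
  rw [overlap, tsum_eq_sum (s := (Finset.range X.length).map Nat.castEmbedding), Finset.sum_map]
  · rfl
  · intro t ht
    refine mul_eq_zero_of_left (chargeAt_eq_zero ?_) _
    by_contra! hin
    refine ht (Finset.mem_map.2 ⟨t.toNat, Finset.mem_range.2 (by omega), ?_⟩)
    exact Int.toNat_of_nonneg hin.1

theorem overlap_reverse (X Y : List Dip) (s : ℤ) :
    overlap X Y.reverse (Equiv.addLeft s) = overlap X Y (Equiv.subLeft (Y.length - 1 - s)) := by
  simp only [overlap, chargeAt_reverse, Equiv.coe_addLeft, Equiv.subLeft_apply, sub_sub, add_assoc]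

theorem force_drop (X Y : List Dip) (m : ℕ) :
    force X (Y.drop m) = -overlap X Y (Equiv.addLeft m) := by
  simp only [force_eq_neg_sum_range, overlap_eq_sum_range, Equiv.coe_addLeft,
    ← chargeAt_drop_natCast, chargeAt_natCast]

theorem force_reverse (X Y : List Dip) :
    force X Y.reverse = -overlap X Y (Equiv.subLeft (Y.length - 1)) := by
  rw [← List.drop_zero (l := Y.reverse), force_drop, overlap_reverse, Nat.cast_zero, sub_zero]

theorem aligned_of_overlap_nonneg {X Y : List Dip} (hlen : X.length = Y.length)
    (htranslate : ∀ s, 0 ≤ overlap X Y (Equiv.addLeft s))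
    (hreflect : ∀ s : ℤ, s ≠ Y.length - 1 → 0 ≤ overlap X Y (Equiv.subLeft s)) :
    aligned X Y := by
  have hforce : force X Y ≤ 0 := by
    rw [← List.drop_zero (l := Y), force_drop]
    exact neg_nonpos.2 (htranslate _)
  have hprefix : ∀ A : List Dip, ∀ i, 0 ≤ overlap X A (Equiv.addLeft ((A.length - i : ℕ) : ℤ)) →
      force (X.take i) (sufx A i) ≤ 0 := fun A i h => by
    rw [force_take_sufx, sufx, force_drop]
    exact neg_nonpos.2 h
  have hsuffix : ∀ A : List Dip, ∀ i, 0 ≤ overlap X A (Equiv.addLeft (-((X.length - i : ℕ) : ℤ))) →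
      force (sufx X i) (A.take i) ≤ 0 := fun A i h => by
    rw [force_comm, force_take_sufx, sufx, force_drop, overlap_comm, Equiv.addLeft_symm]
    exact neg_nonpos.2 h
  refine ⟨hforce, fun A hA i hi hiX => ?_⟩
  obtain rfl | rfl : A = Y ∨ A = Y.reverse := by simpa using hA
  · exact ⟨hprefix _ i (htranslate _), hsuffix _ i (htranslate _)⟩
  · refine ⟨hprefix _ i ?_, hsuffix _ i ?_⟩ <;> rw [overlap_reverse]
    · exact hreflect _ (by rw [List.length_reverse]; omega)
    · exact hreflect _ (by omega)

theorem overlap_nonneg_of_chargeAt_nonneg {X Y : List Dip} (σ : ℤ ≃ ℤ)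
    (hX : ∀ t, 0 ≤ chargeAt X t) (hY : ∀ t, 0 ≤ chargeAt Y t) : 0 ≤ overlap X Y σ :=
  tsum_nonneg fun t => mul_nonneg (hX t) (hY (σ t))

theorem sum_le_overlap {X Y : List Dip} {σ : ℤ ≃ ℤ} (T : Finset ℤ)
    (hT : ∀ t ∉ T, 0 ≤ chargeAt X t * chargeAt Y (σ t)) :
    ∑ t ∈ T, chargeAt X t * chargeAt Y (σ t) ≤ overlap X Y σ := by
  refine Summable.sum_le_tsum T hT (summable_of_hasFiniteSupport ?_)
  refine (Set.finite_Ico (0 : ℤ) X.length).subset fun t ht => ?_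
  by_contra hout
  rw [Set.mem_Ico] at hout
  exact ht (mul_eq_zero_of_left (chargeAt_eq_zero (by omega)) _)

/-- The three positions at which the probe of the vertex `i` carries the letter `0`; only the last
one depends on `i`. -/
def probeSites (k i : ℕ) : Finset ℤ := {(k : ℤ) + 10, 2 * (k : ℤ) + 13, 2 * (k : ℤ) + 13 + i}

/-- The word of a vertex `i` in the first colour class: blank but for three letters `0`. -/
def probe (k i : ℕ) : List Dip :=
  (List.range (3 * k + 14)).map fun t : ℕ => if (t : ℤ) ∈ probeSites k i then zero else blank

theorem length_probe (k i : ℕ) : (probe k i).length = 3 * k + 14 := by simp [probe]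

section Probe

variable {k i : ℕ}

theorem chargeAt_probe (hi : i ≤ k) (t : ℤ) :
    chargeAt (probe k i) t = if t ∈ probeSites k i then 1 else 0 := by
  by_cases ht : 0 ≤ t ∧ t < 3 * k + 14
  · rw [probe, chargeAt_map_range ht.1 (by exact_mod_cast ht.2), Int.toNat_of_nonneg ht.1]
    split_ifs <;> rfl
  · have hsite : t ∉ probeSites k i := by
      simp only [probeSites, Finset.mem_insert, Finset.mem_singleton]
      omega
    rw [if_neg hsite, chargeAt_eq_zero (by rw [length_probe]; omega)]

theorem chargeAt_probe_nonneg (hi : i ≤ k) (t : ℤ) : 0 ≤ chargeAt (probe k i) t := by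
  rw [chargeAt_probe hi]
  split_ifs <;> simp

theorem overlap_probe (hi : i ≤ k) (Y : List Dip) (σ : ℤ ≃ ℤ) :
    overlap (probe k i) Y σ = ∑ m ∈ probeSites k i, chargeAt Y (σ m) := by
  rw [overlap, tsum_eq_sum fun t ht => by rw [chargeAt_probe hi, if_neg ht, zero_mul]]
  exact Finset.sum_congr rfl fun t ht => by rw [chargeAt_probe hi, if_pos ht, one_mul]

end Probe

open Classical in
/-- The word of a vertex with neighbourhood `E` in the second colour class: one slot for each
vertex, which is blank for the neighbours, then a blank, then two runs of `0` separated by a `1`.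
The slots are in decreasing order, that of vertex `i` at position `k - i`, because they face the
probes reversed. -/
noncomputable def panel (k : ℕ) (E : ℕ → Prop) : List Dip :=
  (List.range (3 * k + 14)).map fun t =>
    if t = 2 * k + 3 then one
    else if t = k ∨ t < k ∧ E (k - t) then blank
    else zero

/-- The positions of the two runs of `0` around the letter `1` of a panel. -/
def panelRuns (k : ℕ) : Set ℤ := {t | k < t ∧ t < 3 * k + 14 ∧ t ≠ 2 * k + 3}

theorem length_panel (k : ℕ) (E : ℕ → Prop) : (panel k E).length = 3 * k + 14 := by simp [panel]

section Panel

variable {k : ℕ} (E : ℕ → Prop)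

theorem chargeAt_panel_center : chargeAt (panel k E) (2 * k + 3) = -1 := by
  rw [panel, chargeAt_map_range (by omega) (by push_cast; omega), if_pos (by omega), charge]

theorem chargeAt_panel_separator : chargeAt (panel k E) k = 0 := by
  rw [panel, chargeAt_map_range (by omega) (by push_cast; omega), if_neg (by omega),
    if_pos (.inl (by omega)), charge]

open Classical in
theorem chargeAt_panel_slot {i : ℕ} (hi₁ : 1 ≤ i) (hik : i ≤ k) :
    chargeAt (panel k E) (k - i) = if E i then 0 else 1 := by
  have hpos : (k - i : ℤ).toNat = k - i := by omega
  rw [panel, chargeAt_map_range (by omega) (by push_cast; omega), hpos, if_neg (by omega),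
    Nat.sub_sub_self hik]
  have hslot : (k - i = k ∨ k - i < k ∧ E i) ↔ E i :=
    ⟨fun h => (h.resolve_left (by omega)).2, fun h => .inr ⟨by omega, h⟩⟩
  rw [if_congr hslot rfl rfl]
  split_ifs <;> rfl

variable {E}

theorem chargeAt_panel_run {t : ℤ} (ht : t ∈ panelRuns k) : chargeAt (panel k E) t = 1 := by
  obtain ⟨h₁, h₂, h₃⟩ := ht
  rw [panel, chargeAt_map_range (by omega) (by push_cast; omega), if_neg (by omega),
    if_neg (by omega), charge]

theorem chargeAt_panel_nonneg {t : ℤ} (ht : t ≠ 2 * k + 3) : 0 ≤ chargeAt (panel k E) t := by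
  by_cases hout : t < 0 ∨ 3 * k + 14 ≤ t
  · exact (chargeAt_eq_zero (by rwa [length_panel])).ge
  rw [panel, chargeAt_map_range (by omega) (by push_cast; omega), if_neg (by omega)]
  split_ifs <;> simp [charge]

end Panel

section ProbePanel

variable {k i : ℕ} {E : ℕ → Prop}

theorem overlap_probe_panel_nonneg_of_compensated (hi : i ≤ k) (σ : ℤ ≃ ℤ)
    (hσ : ∀ m ∈ probeSites k i, σ m = 2 * k + 3 → ∃ p ∈ probeSites k i, σ p ∈ panelRuns k) :
    0 ≤ overlap (probe k i) (panel k E) σ := by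
  rw [overlap_probe hi]
  by_cases hcenter : ∃ m ∈ probeSites k i, σ m = 2 * k + 3
  · obtain ⟨m, hm, hσm⟩ := hcenter
    obtain ⟨p, hp, hσp⟩ := hσ m hm hσm
    have hmp : m ≠ p := by
      rintro rfl
      exact hσp.2.2 hσm
    calc 0 = ∑ t ∈ {m, p}, chargeAt (panel k E) (σ t) := by
          rw [Finset.sum_pair hmp, hσm, chargeAt_panel_center, chargeAt_panel_run hσp,
            neg_add_cancel]
      _ ≤ _ := by
          refine Finset.sum_le_sum_of_subset_of_nonneg (by simp [Finset.insert_subset_iff, hm, hp])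
            fun t _ ht => chargeAt_panel_nonneg fun hσt => ht ?_
          rw [σ.injective (hσt.trans hσm.symm)]
          exact Finset.mem_insert_self m {p}
  · push Not at hcenter
    exact Finset.sum_nonneg fun t ht => chargeAt_panel_nonneg (hcenter t ht)

theorem overlap_probe_panel_addLeft_nonneg (hi₁ : 1 ≤ i) (hik : i ≤ k) (s : ℤ) :
    0 ≤ overlap (probe k i) (panel k E) (Equiv.addLeft s) := by
  refine overlap_probe_panel_nonneg_of_compensated hik _ ?_
  simp only [probeSites, panelRuns, Finset.mem_insert, Finset.mem_singleton, forall_eq_or_imp,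
    forall_eq, exists_eq_or_imp, exists_eq_left, Equiv.coe_addLeft, Set.mem_ofPred_eq]
  omega

theorem overlap_probe_panel_subLeft_nonneg (hi₁ : 1 ≤ i) (hik : i ≤ k) {s : ℤ}
    (hs : s ≠ 3 * k + 13) : 0 ≤ overlap (probe k i) (panel k E) (Equiv.subLeft s) := by
  refine overlap_probe_panel_nonneg_of_compensated hik _ ?_
  simp only [probeSites, panelRuns, Finset.mem_insert, Finset.mem_singleton, forall_eq_or_imp,
    forall_eq, exists_eq_or_imp, exists_eq_left, Equiv.subLeft_apply, Set.mem_ofPred_eq]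
  omega

open Classical in
theorem overlap_probe_panel_reversal (hi₁ : 1 ≤ i) (hik : i ≤ k) :
    overlap (probe k i) (panel k E) (Equiv.subLeft (3 * k + 13)) = if E i then -1 else 0 := by
  have hsites : ∑ m ∈ probeSites k i, chargeAt (panel k E) (3 * k + 13 - m) =
      chargeAt (panel k E) (2 * k + 3) +
        (chargeAt (panel k E) k + chargeAt (panel k E) (k - i)) := by
    rw [probeSites, Finset.sum_insert (by simp; omega), Finset.sum_pair (by omega)]
    congr 2
    · ring
    · congr 1
      ring
    · congr 1
      ring
  simp only [overlap_probe hik, Equiv.subLeft_apply]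
  rw [hsites, chargeAt_panel_center, chargeAt_panel_separator, chargeAt_panel_slot E hi₁ hik]
  split_ifs <;> rfl

end ProbePanel

section PanelPanel

variable {k : ℕ} {E F : ℕ → Prop} {σ : ℤ ≃ ℤ}

theorem chargeAt_panel_mul_chargeAt_panel_nonneg {t : ℤ} (ht : t ≠ 2 * k + 3)
    (hσt : t ≠ σ.symm (2 * k + 3)) :
    0 ≤ chargeAt (panel k E) t * chargeAt (panel k F) (σ t) :=
  mul_nonneg (chargeAt_panel_nonneg ht)
    (chargeAt_panel_nonneg fun h => hσt (σ.eq_symm_apply.2 h))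

theorem overlap_panel_panel_nonneg_of_center_nonpos
    (hσ : chargeAt (panel k F) (σ (2 * k + 3)) ≤ 0)
    (hσ' : chargeAt (panel k E) (σ.symm (2 * k + 3)) ≤ 0) :
    0 ≤ overlap (panel k E) (panel k F) σ := by
  refine tsum_nonneg fun t => ?_
  by_cases hc : t = 2 * k + 3
  · rw [hc, chargeAt_panel_center]
    linarith
  by_cases hb : t = σ.symm (2 * k + 3)
  · rw [hb, σ.apply_symm_apply, chargeAt_panel_center]
    linarith
  exact chargeAt_panel_mul_chargeAt_panel_nonneg hc hb

theorem overlap_panel_panel_nonneg_of_fixed_center (hσ : σ (2 * k + 3) = 2 * k + 3) :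
    0 ≤ overlap (panel k E) (panel k F) σ := by
  have hσ' : σ.symm (2 * k + 3) = 2 * k + 3 := σ.symm_apply_eq.2 hσ.symm
  apply overlap_panel_panel_nonneg_of_center_nonpos <;>
    simp only [hσ, hσ', chargeAt_panel_center] <;> decide

-- Only the two terms in which a letter `1` takes part can be negative, and both are at least `-1`.
theorem overlap_panel_panel_nonneg_of_nontrivial
    (hσ : (panelRuns k ∩ σ ⁻¹' panelRuns k).Nontrivial) :
    0 ≤ overlap (panel k E) (panel k F) σ := by
  by_cases hfix : σ (2 * k + 3) = 2 * k + 3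
  · exact overlap_panel_panel_nonneg_of_fixed_center hfix
  obtain ⟨p, ⟨hp, hσp⟩, q, ⟨hq, hσq⟩, hpq⟩ := hσ
  set c : ℤ := 2 * k + 3 with hc
  set b : ℤ := σ.symm c
  have hσb : σ b = c := σ.apply_symm_apply c
  have hcb : c ≠ b := fun h => hfix (by rwa [← h] at hσb)
  have ne_c : ∀ {t}, t ∈ panelRuns k → c ≠ t := fun ht h => ht.2.2 h.symm
  have ne_b : ∀ {t}, σ t ∈ panelRuns k → b ≠ t := fun ht h => ht.2.2 (by rw [← h, hσb])
  have hcterm : -1 ≤ chargeAt (panel k E) c * chargeAt (panel k F) (σ c) := by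
    rw [hc, chargeAt_panel_center]
    linarith [le_of_abs_le (abs_chargeAt_le_one (panel k F) (σ c))]
  have hbterm : -1 ≤ chargeAt (panel k E) b * chargeAt (panel k F) (σ b) := by
    rw [hσb, hc, chargeAt_panel_center]
    linarith [le_of_abs_le (abs_chargeAt_le_one (panel k E) b)]
  have hsum : 0 ≤ ∑ t ∈ {c, b, p, q}, chargeAt (panel k E) t * chargeAt (panel k F) (σ t) := by
    rw [Finset.sum_insert (by simp [hcb, ne_c hp, ne_c hq]),
      Finset.sum_insert (by simp [ne_b hσp, ne_b hσq]), Finset.sum_pair hpq,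
      chargeAt_panel_run hp, chargeAt_panel_run hσp, chargeAt_panel_run hq, chargeAt_panel_run hσq]
    linarith
  refine hsum.trans (sum_le_overlap _ fun t ht => ?_)
  simp only [Finset.mem_insert, not_or] at ht
  exact chargeAt_panel_mul_chargeAt_panel_nonneg ht.1 ht.2.1

theorem overlap_panel_panel_nonneg_of_center_outside
    (hσ : σ (2 * k + 3) < 0 ∨ 3 * k + 14 ≤ σ (2 * k + 3))
    (hσ' : σ.symm (2 * k + 3) < 0 ∨ 3 * k + 14 ≤ σ.symm (2 * k + 3)) :
    0 ≤ overlap (panel k E) (panel k F) σ :=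
  overlap_panel_panel_nonneg_of_center_nonpos
    (chargeAt_eq_zero (by rwa [length_panel])).le (chargeAt_eq_zero (by rwa [length_panel])).le

theorem overlap_panel_panel_addLeft_nonneg_of_nonneg {s : ℤ} (hs : 0 ≤ s) :
    0 ≤ overlap (panel k E) (panel k F) (Equiv.addLeft s) := by
  by_cases hfar : 2 * k + 12 ≤ s
  · apply overlap_panel_panel_nonneg_of_center_outside <;>
      simp only [Equiv.coe_addLeft, Equiv.addLeft_symm] <;> omega
  refine overlap_panel_panel_nonneg_of_nontrivial ?_
  by_cases hnear : s ≤ k + 8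
  · refine ⟨2 * k + 4, ?_, 2 * k + 5, ?_, by omega⟩ <;>
      simp only [panelRuns, Set.mem_inter_iff, Set.mem_preimage, Set.mem_ofPred_eq,
        Equiv.coe_addLeft] <;> omega
  · refine ⟨k + 1, ?_, k + 2, ?_, by omega⟩ <;>
      simp only [panelRuns, Set.mem_inter_iff, Set.mem_preimage, Set.mem_ofPred_eq,
        Equiv.coe_addLeft] <;> omega

theorem overlap_panel_panel_addLeft_nonneg (s : ℤ) :
    0 ≤ overlap (panel k E) (panel k F) (Equiv.addLeft s) := by
  rcases le_total 0 s with hs | hs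
  · exact overlap_panel_panel_addLeft_nonneg_of_nonneg hs
  · rw [overlap_comm, Equiv.addLeft_symm]
    exact overlap_panel_panel_addLeft_nonneg_of_nonneg (neg_nonneg.2 hs)

theorem overlap_panel_panel_subLeft_nonneg (hk : 0 < k) (s : ℤ) :
    0 ≤ overlap (panel k E) (panel k F) (Equiv.subLeft s) := by
  by_cases hfar : s < 2 * k + 3 ∨ 5 * k + 17 ≤ s
  · apply overlap_panel_panel_nonneg_of_center_outside <;>
      simp only [Equiv.symm_subLeft, Equiv.subLeft_apply] <;> omega
  -- The reflection `t ↦ s - t` is an involution, so a single non-fixed position gives two.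
  have hpair : ∀ p : ℤ, p ≠ s - p → p ∈ panelRuns k → s - p ∈ panelRuns k →
      0 ≤ overlap (panel k E) (panel k F) (Equiv.subLeft s) := fun p hne hp hsp =>
    overlap_panel_panel_nonneg_of_nontrivial
      ⟨p, ⟨hp, hsp⟩, s - p, ⟨hsp, by simpa using hp⟩, hne⟩
  simp only [panelRuns, Set.mem_ofPred_eq] at hpair
  by_cases hleft : s = 3 * k + 4
  · exact hpair (k + 2) (by omega) (by omega) (by omega)
  by_cases hmid : s ≤ 4 * k + 14
  · exact hpair (k + 1) (by omega) (by omega) (by omega)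
  · exact hpair (2 * k + 4) (by omega) (by omega) (by omega)

end PanelPanel

open Classical in
/-- The words encoding the bond relation `E`, with colour classes `S` and its complement. -/
noncomputable def bondWord (k : ℕ) (S : Finset ℕ) (E : ℕ → ℕ → Prop) (j : ℕ) : List Dip :=
  if j ∈ S then probe k j else panel k fun i => E i j

theorem length_bondWord (k : ℕ) (S : Finset ℕ) (E : ℕ → ℕ → Prop) (j : ℕ) :
    (bondWord k S E j).length = 3 * k + 14 := by
  rw [bondWord]
  split_ifs
  · exact length_probe k j
  · exact length_panel k _

section BondWord

variable {k i j : ℕ} {S : Finset ℕ} {E : ℕ → ℕ → Prop}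

theorem overlap_bondWord_addLeft_nonneg (hi : i ∈ Finset.Icc 1 k) (hj : j ∈ Finset.Icc 1 k)
    (s : ℤ) : 0 ≤ overlap (bondWord k S E i) (bondWord k S E j) (Equiv.addLeft s) := by
  obtain ⟨hi₁, hik⟩ := Finset.mem_Icc.1 hi
  obtain ⟨hj₁, hjk⟩ := Finset.mem_Icc.1 hj
  rw [bondWord, bondWord]
  split_ifs
  · exact overlap_nonneg_of_chargeAt_nonneg _ (chargeAt_probe_nonneg hik)
      (chargeAt_probe_nonneg hjk)
  · exact overlap_probe_panel_addLeft_nonneg hi₁ hik s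
  · rw [overlap_comm, Equiv.addLeft_symm]
    exact overlap_probe_panel_addLeft_nonneg hj₁ hjk (-s)
  · exact overlap_panel_panel_addLeft_nonneg s

theorem overlap_bondWord_subLeft_nonneg (hi : i ∈ Finset.Icc 1 k) (hj : j ∈ Finset.Icc 1 k)
    {s : ℤ} (hs : s ≠ 3 * k + 13) :
    0 ≤ overlap (bondWord k S E i) (bondWord k S E j) (Equiv.subLeft s) := by
  obtain ⟨hi₁, hik⟩ := Finset.mem_Icc.1 hi
  obtain ⟨hj₁, hjk⟩ := Finset.mem_Icc.1 hj
  rw [bondWord, bondWord]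
  split_ifs
  · exact overlap_nonneg_of_chargeAt_nonneg _ (chargeAt_probe_nonneg hik)
      (chargeAt_probe_nonneg hjk)
  · exact overlap_probe_panel_subLeft_nonneg hi₁ hik hs
  · rw [overlap_comm, Equiv.symm_subLeft]
    exact overlap_probe_panel_subLeft_nonneg hj₁ hjk hs
  · exact overlap_panel_panel_subLeft_nonneg (hi₁.trans hik) s

theorem overlap_bondWord_reversal_neg_iff (hi : i ∈ Finset.Icc 1 k) (hj : j ∈ Finset.Icc 1 k)
    (hsymm : E i j ↔ E j i) (hbip : E i j → ¬(i ∈ S ↔ j ∈ S)) :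
    overlap (bondWord k S E i) (bondWord k S E j) (Equiv.subLeft (3 * k + 13)) < 0 ↔ E i j := by
  obtain ⟨hi₁, hik⟩ := Finset.mem_Icc.1 hi
  obtain ⟨hj₁, hjk⟩ := Finset.mem_Icc.1 hj
  rw [bondWord, bondWord]
  split_ifs with hiS hjS hjS
  · exact iff_of_false (overlap_nonneg_of_chargeAt_nonneg _ (chargeAt_probe_nonneg hik)
      (chargeAt_probe_nonneg hjk)).not_gt fun h => hbip h (iff_of_true hiS hjS)
  · rw [overlap_probe_panel_reversal hi₁ hik]
    split_ifs with h <;> simp [h]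
  · rw [overlap_comm, Equiv.symm_subLeft, overlap_probe_panel_reversal hj₁ hjk, hsymm]
    split_ifs with h <;> simp [h]
  · exact iff_of_false (overlap_panel_panel_subLeft_nonneg (hi₁.trans hik) _).not_gt
      fun h => hbip h (iff_of_false hiS hjS)

end BondWord

/-- For every `k`-glue function `g` whose bond graph is bipartite, there is a set of `k`
dipole words, each of length `3k+14`, that attractively encodes `g`. -/
theorem stmt2 (k : ℕ) (hk : 0 < k) (g : ℕ → ℕ → ℤ)
    (hsym : ∀ i ∈ Finset.Icc 1 k, ∀ j ∈ Finset.Icc 1 k, g i j = g j i)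
    (hbip : ∃ S : Finset ℕ, ∀ i ∈ Finset.Icc 1 k, ∀ j ∈ Finset.Icc 1 k,
      0 < g i j → ¬(i ∈ S ↔ j ∈ S)) :
    ∃ W : ℕ → List Dip,
      (∀ i ∈ Finset.Icc 1 k, (W i).length = 3 * k + 14) ∧
      attEncodes k W g := by
  obtain ⟨S, hS⟩ := hbip
  let E : ℕ → ℕ → Prop := fun i j => 0 < g i j
  have hcenter : ∀ j, ((bondWord k S E j).length : ℤ) - 1 = 3 * k + 13 := fun j => by
    rw [length_bondWord]
    push_cast
    ring
  refine ⟨bondWord k S E, fun i _ => length_bondWord k S E i, fun i hi j hj => ?_,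
    fun i hi j hj => ?_⟩
  · refine aligned_of_overlap_nonneg (by rw [length_bondWord, length_bondWord])
      (overlap_bondWord_addLeft_nonneg hi hj) fun s hs => ?_
    exact overlap_bondWord_subLeft_nonneg hi hj (hcenter j ▸ hs)
  · have hsymm : E i j ↔ E j i := iff_of_eq (congrArg (0 < ·) (hsym i hi j hj))
    rw [force_reverse, hcenter, neg_pos]
    exact overlap_bondWord_reversal_neg_iff hi hj hsymm (hS i hi j hj)
end

section
/- There exists a constant c > 0 such that for every integer k ≥ 2 there exists a set of k dipole words of common length at most c·log₂(k) that attractively encodes the canonical unsigned k-glue function. -/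
open Dip

/-!
Read force as minus the correlation of charge sequences. For a set `C` of `N` places in the left
half of a word, put negative charges on `C`, positive charges on the rest of the left half and on
the mirror image of `C` in the right half, and `N - 1` further positive charges in the right half.
A placement of two such words on top of each other has at most `2 * N` attracting places, those
where one of the codes lies. If the left halves overlap substantially they repel at least as much;
otherwise the geometry rules out attraction altogether, unless one word is reversed and the words
face each other almost exactly. Then the attraction is twice the number of places where the two
codes match, against a repulsion of at least `2 * (N - 1)` from the further charges, so it wins
only if the codes match completely. Codes are taken with a common leftmost place, so that a
complete match means equal codes in the central position, and there are exponentially many of them.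
-/

section Letters

lemma lf_eq_one_iff {x y : Dip} : lf x y = 1 ↔ x = zero ∧ y = one ∨ x = one ∧ y = zero := by
  cases x <;> cases y <;> decide

lemma lf_eq_neg_one_iff {x y : Dip} :
    lf x y = -1 ↔ x = zero ∧ y = zero ∨ x = one ∧ y = one := by
  cases x <;> cases y <;> decide

lemma lf_eq_ite (x y : Dip) :
    lf x y = (if lf x y = 1 then 1 else 0) - (if lf x y = -1 then 1 else 0) := by
  cases x <;> cases y <;> decide

lemma lf_blank_right (x : Dip) : lf x blank = 0 := by
  cases x <;> rfl

variable {ι : Type*} {S A R : Finset ι} {u v : ι → Dip}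

lemma sum_lf_eq_card_sub_card (S : Finset ι) (u v : ι → Dip) :
    ∑ t ∈ S, lf (u t) (v t) =
      ({t ∈ S | lf (u t) (v t) = 1} : Finset ι).card -
        ({t ∈ S | lf (u t) (v t) = -1} : Finset ι).card := by
  rw [Finset.sum_congr rfl fun t _ => lf_eq_ite (u t) (v t), Finset.sum_sub_distrib,
    Finset.sum_boole, Finset.sum_boole]

lemma sum_lf_nonpos_of_card_le (hA : ∀ t ∈ S, lf (u t) (v t) = 1 → t ∈ A)
    (hR : ∀ t ∈ R, t ∈ S ∧ lf (u t) (v t) = -1) (hAR : A.card ≤ R.card) :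
    ∑ t ∈ S, lf (u t) (v t) ≤ 0 := by
  have attracting : ({t ∈ S | lf (u t) (v t) = 1} : Finset ι).card ≤ A.card :=
    Finset.card_le_card fun t ht => hA t (Finset.mem_filter.1 ht).1 (Finset.mem_filter.1 ht).2
  have repelling : R.card ≤ ({t ∈ S | lf (u t) (v t) = -1} : Finset ι).card :=
    Finset.card_le_card fun t ht => Finset.mem_filter.2 (hR t ht)
  rw [sum_lf_eq_card_sub_card]
  omega

lemma sum_lf_pos_of_card_lt (hA : ∀ t ∈ A, t ∈ S ∧ lf (u t) (v t) = 1)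
    (hR : ∀ t ∈ S, lf (u t) (v t) = -1 → t ∈ R) (hRA : R.card < A.card) :
    0 < ∑ t ∈ S, lf (u t) (v t) := by
  have attracting : A.card ≤ ({t ∈ S | lf (u t) (v t) = 1} : Finset ι).card :=
    Finset.card_le_card fun t ht => Finset.mem_filter.2 (hA t ht)
  have repelling : ({t ∈ S | lf (u t) (v t) = -1} : Finset ι).card ≤ R.card :=
    Finset.card_le_card fun t ht => hR t (Finset.mem_filter.1 ht).1 (Finset.mem_filter.1 ht).2
  rw [sum_lf_eq_card_sub_card]
  omega

end Letters

/-- The word spelled by the letters `w 0, …, w (L - 1)`. Letters are indexed by `ℤ` so that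
overlaps of words become translations and reflections of the index. -/
def spell (L : ℕ) (w : ℤ → Dip) : List Dip := (List.range L).map fun t : ℕ => w t

section Spell

variable {L m : ℕ} {u v : ℤ → Dip}

lemma length_spell (L : ℕ) (w : ℤ → Dip) : (spell L w).length = L := by
  simp [spell]

lemma take_spell (w : ℤ → Dip) (hm : m ≤ L) : (spell L w).take m = spell m w := by
  simp [spell, ← List.map_take, hm]

lemma sufx_spell (w : ℤ → Dip) (hm : m ≤ L) :
    sufx (spell L w) m = spell m fun t => w (t + (L - m)) := by
  refine List.ext_getElem (by simp [sufx, spell]; omega) fun t _ _ => ?_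
  simp only [sufx, spell, List.getElem_drop, List.getElem_map, List.getElem_range,
    List.length_map, List.length_range]
  congr 1
  omega

lemma reverse_spell (L : ℕ) (w : ℤ → Dip) :
    (spell L w).reverse = spell L fun t => w (L - 1 - t) := by
  refine List.ext_getElem (by simp [spell]) fun t ht _ => ?_
  simp only [spell, List.length_reverse, List.length_map, List.length_range] at ht
  simp only [spell, List.getElem_reverse, List.getElem_map, List.getElem_range,
    List.length_map, List.length_range]
  congr 1
  omega

lemma force_spell (L : ℕ) (u v : ℤ → Dip) :
    force (spell L u) (spell L v) = ∑ t ∈ Finset.Ico (0 : ℤ) L, lf (u t) (v t) := by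
  have range_eq : Finset.Ico (0 : ℤ) L = (Finset.range L).map Nat.castEmbedding := by
    ext t
    simp only [Finset.mem_Ico, Finset.mem_map, Finset.mem_range, Nat.castEmbedding_apply]
    exact ⟨fun h => ⟨t.toNat, by omega, by omega⟩, by rintro ⟨a, ha, rfl⟩; omega⟩
  rw [range_eq, Finset.sum_map, force, spell, spell, List.zipWith_map, List.zipWith_self]
  rfl

lemma force_take_sufx_spell (u : ℤ → Dip) (hv : ∀ t, (L : ℤ) ≤ t → v t = blank) (hm : m ≤ L) :
    force ((spell L u).take m) (sufx (spell L v) m) =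
      ∑ t ∈ Finset.Ico (0 : ℤ) L, lf (u t) (v (t + (L - m))) := by
  rw [take_spell u hm, sufx_spell v hm, force_spell]
  refine Finset.sum_subset (Finset.Ico_subset_Ico le_rfl (by omega)) fun t _ ht => ?_
  simp only [Finset.mem_Ico] at *
  rw [hv _ (by omega), lf_blank_right]

lemma force_sufx_take_spell (u : ℤ → Dip) (hv : ∀ t < 0, v t = blank) (hm : m ≤ L) :
    force (sufx (spell L u) m) ((spell L v).take m) =
      ∑ t ∈ Finset.Ico (0 : ℤ) L, lf (u t) (v (t + (m - L))) := by
  have translate := Finset.sum_Ico_add' (fun t => lf (u t) (v (t + (m - L)))) 0 (m : ℤ) (L - m)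
  simp only [add_assoc, sub_add_sub_cancel, sub_self, add_zero] at translate
  rw [take_spell v hm, sufx_spell u hm, force_spell, translate]
  refine Finset.sum_subset (Finset.Ico_subset_Ico (by omega) (by omega)) fun t _ ht => ?_
  simp only [Finset.mem_Ico] at *
  rw [hv _ (by omega), lf_blank_right]

lemma aligned_spell (hv : ∀ t ∉ Finset.Ico (0 : ℤ) L, v t = blank)
    (translates : ∀ s, ∑ t ∈ Finset.Ico (0 : ℤ) L, lf (u t) (v (t + s)) ≤ 0)
    (reflections : ∀ c ≠ (L : ℤ) - 1, ∑ t ∈ Finset.Ico (0 : ℤ) L, lf (u t) (v (c - t)) ≤ 0) :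
    aligned (spell L u) (spell L v) := by
  refine ⟨?_, fun A hA m _ hm => ?_⟩
  · simpa [force_spell] using translates 0
  rw [length_spell] at hm
  simp only [List.mem_cons, List.not_mem_nil, or_false] at hA
  rcases hA with rfl | rfl
  · rw [force_take_sufx_spell u (fun t ht => hv t (by simp; omega)) (by omega),
      force_sufx_take_spell u (fun t ht => hv t (by simp; omega)) (by omega)]
    exact ⟨translates _, translates _⟩
  · rw [reverse_spell, force_take_sufx_spell u (fun t ht => hv _ (by simp; omega)) (by omega),
      force_sufx_take_spell u (fun t ht => hv _ (by simp; omega)) (by omega)]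
    simp only [add_comm _ ((_ : ℤ) - _), ← sub_sub]
    exact ⟨reflections _ (by omega), reflections _ (by omega)⟩

end Spell

/-- The image of `D` under the reflection of `ℤ` that swaps `0` and `c`. Placing a reversed word on
top of another one reflects its places in this way. -/
def mirror (c : ℤ) (D : Finset ℤ) : Finset ℤ := D.map (Equiv.subLeft c).toEmbedding

lemma mem_mirror {c t : ℤ} {D : Finset ℤ} : t ∈ mirror c D ↔ c - t ∈ D := by
  simp [mirror, Finset.mem_map_equiv, neg_add_eq_sub]

lemma card_mirror (c : ℤ) (D : Finset ℤ) : (mirror c D).card = D.card :=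
  Finset.card_map _

/-- The sets of `N` places that distinguish the words. They share their leftmost place `13 * N`,
so that no code is a proper translate of another one. -/
structure IsCode (N : ℕ) (C : Finset ℤ) : Prop where
  subset_Ico : C ⊆ Finset.Ico (13 * N) (15 * N)
  left_mem : 13 * (N : ℤ) ∈ C
  card_eq : C.card = N

/-- The letters of the word of a code `C`, which occupies the places `0, …, 44 * N - 1`: `zero` on
`C`; `one` on the rest of the left half, on the mirror image of `C`, and on a run of length `N - 1`.
The multiples of `N` are chosen so that `C` and the mirror image of the run lie in the second half
of the left half, `C` first, and are at least `4 * N` away from each other. -/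
def codeProfile (N : ℕ) (C : Finset ℤ) (t : ℤ) : Dip :=
  if t ∈ C then zero
  else if 0 ≤ t ∧ t < 22 * N ∨ 24 * N < t ∧ t < 25 * N ∨ 44 * N - 1 - t ∈ C then one
  else blank

section CodeProfile

variable {N : ℕ} {C C' : Finset ℤ}

lemma IsCode.bounds (hC : IsCode N C) {t : ℤ} (ht : t ∈ C) : 13 * N ≤ t ∧ t < 15 * N :=
  Finset.mem_Ico.1 (hC.subset_Ico ht)

lemma codeProfile_eq_zero_iff {t : ℤ} : codeProfile N C t = zero ↔ t ∈ C := by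
  unfold codeProfile
  split_ifs <;> simp_all

lemma codeProfile_eq_one_iff {t : ℤ} :
    codeProfile N C t = one ↔ t ∉ C ∧ (0 ≤ t ∧ t < 22 * N ∨ 24 * N < t ∧ t < 25 * N ∨
      44 * N - 1 - t ∈ C) := by
  unfold codeProfile
  split_ifs <;> simp_all

lemma codeProfile_eq_blank (hC : IsCode N C) {t : ℤ}
    (ht : t ∉ Finset.Ico (0 : ℤ) (44 * N : ℕ)) : codeProfile N C t = blank := by
  rw [Finset.mem_Ico] at ht
  rw [codeProfile, if_neg fun h => ?_, if_neg ?_]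
  · rintro (h | h | h)
    · omega
    · omega
    · have := hC.bounds h
      omega
  · have := hC.bounds h
    omega

lemma IsCode.bounds_of_codeProfile_eq_one (hC : IsCode N C) {t : ℤ}
    (ht : codeProfile N C t = one) :
    0 ≤ t ∧ t < 22 * N ∨ 24 * N < t ∧ t < 25 * N ∨ 29 * N ≤ t ∧ t < 31 * N := by
  rcases (codeProfile_eq_one_iff.1 ht).2 with h | h | h
  · exact Or.inl h
  · exact Or.inr (Or.inl h)
  · have := hC.bounds h
    omega

lemma bounds_of_lf_codeProfile_eq_one (hC : IsCode N C) (hC' : IsCode N C') {x y : ℤ}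
    (h : lf (codeProfile N C x) (codeProfile N C' y) = 1) :
    (13 * N ≤ x ∧ x < 15 * N) ∧
        (0 ≤ y ∧ y < 22 * N ∨ 24 * N < y ∧ y < 25 * N ∨ 29 * N ≤ y ∧ y < 31 * N) ∨
      (0 ≤ x ∧ x < 22 * N ∨ 24 * N < x ∧ x < 25 * N ∨ 29 * N ≤ x ∧ x < 31 * N) ∧
        (13 * N ≤ y ∧ y < 15 * N) := by
  rcases lf_eq_one_iff.1 h with ⟨hx, hy⟩ | ⟨hx, hy⟩
  · exact Or.inl ⟨hC.bounds (codeProfile_eq_zero_iff.1 hx), hC'.bounds_of_codeProfile_eq_one hy⟩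
  · exact Or.inr ⟨hC.bounds_of_codeProfile_eq_one hx, hC'.bounds (codeProfile_eq_zero_iff.1 hy)⟩

lemma sum_lf_codeProfile_nonpos_of_overlap (hC : IsCode N C) (hC' : IsCode N C') (σ : ℤ ≃ ℤ)
    {J : Finset ℤ}
    (hJ : ∀ t ∈ J, (0 ≤ t ∧ t < 22 * N) ∧ 0 ≤ σ t ∧ σ t < 22 * N) (hcard : 4 * N ≤ J.card) :
    ∑ t ∈ Finset.Ico (0 : ℤ) (44 * N : ℕ),
      lf (codeProfile N C t) (codeProfile N C' (σ t)) ≤ 0 := by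
  have hcodes : (C ∪ C'.map σ.symm.toEmbedding).card ≤ 2 * N := by
    refine (Finset.card_union_le _ _).trans_eq ?_
    rw [Finset.card_map, hC.card_eq, hC'.card_eq, two_mul]
  refine sum_lf_nonpos_of_card_le (A := C ∪ C'.map σ.symm.toEmbedding)
    (R := J \ (C ∪ C'.map σ.symm.toEmbedding)) (fun t _ ht => ?_) (fun t ht => ?_) ?_
  · simp only [Finset.mem_union, Finset.mem_map_equiv, Equiv.symm_symm]
    rw [lf_eq_one_iff, codeProfile_eq_zero_iff, codeProfile_eq_zero_iff] at ht
    exact ht.imp And.left And.right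
  · simp only [Finset.mem_sdiff, Finset.mem_union, Finset.mem_map_equiv, Equiv.symm_symm,
      not_or] at ht
    obtain ⟨htJ, htC, htC'⟩ := ht
    obtain ⟨ht, hσt⟩ := hJ t htJ
    exact ⟨Finset.mem_Ico.2 (by omega), lf_eq_neg_one_iff.2 (Or.inr
      ⟨codeProfile_eq_one_iff.2 ⟨htC, Or.inl ht⟩, codeProfile_eq_one_iff.2 ⟨htC', Or.inl hσt⟩⟩)⟩
  · have := Finset.le_card_sdiff (C ∪ C'.map σ.symm.toEmbedding) J
    omega

lemma sum_lf_codeProfile_translate_nonpos (hC : IsCode N C) (hC' : IsCode N C') (s : ℤ) :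
    ∑ t ∈ Finset.Ico (0 : ℤ) (44 * N : ℕ),
      lf (codeProfile N C t) (codeProfile N C' (t + s)) ≤ 0 := by
  by_cases hs : -(18 * N) ≤ s ∧ s ≤ 18 * N
  · refine sum_lf_codeProfile_nonpos_of_overlap hC hC' (Equiv.addRight s)
      (J := Finset.Ico (max 0 (-s)) (min (22 * N) (22 * N - s))) (fun t ht => ?_) ?_
    · rw [Finset.mem_Ico] at ht
      simp only [Equiv.coe_addRight]
      omega
    · rw [Int.card_Ico]
      omega
  · refine sum_lf_nonpos_of_card_le (A := ∅) (R := ∅) (fun t _ ht => ?_) (by simp) le_rfl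
    have := bounds_of_lf_codeProfile_eq_one hC hC' ht
    omega

lemma IsCode.card_filter_add_mem_lt (hC : IsCode N C) (hC' : IsCode N C') {s : ℤ}
    (h : s ≠ 0 ∨ C ≠ C') : ({t ∈ C | t + s ∈ C'} : Finset ℤ).card < N := by
  rw [← hC.card_eq]
  refine Finset.card_lt_card (Finset.filter_ssubset.2 ?_)
  by_contra! hsubset
  have himage : C.map (addRightEmbedding s) = C' := by
    refine Finset.eq_of_subset_of_card_le (fun y hy => ?_) ?_
    · obtain ⟨t, ht, rfl⟩ := Finset.mem_map.1 hy
      exact hsubset t ht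
    · rw [Finset.card_map, hC.card_eq, hC'.card_eq]
  have hs : s = 0 := by
    have hle := hC'.bounds (hsubset _ hC.left_mem)
    have hleft := hC'.left_mem
    rw [← himage] at hleft
    obtain ⟨t, ht, heq⟩ := Finset.mem_map.1 hleft
    have hge := hC.bounds ht
    rw [addRightEmbedding_apply] at heq
    omega
  subst hs
  refine h.elim (fun h0 => h0 rfl) fun hne => hne ?_
  ext t
  simp [← himage]

lemma code_match_of_lf_codeProfile_eq_one (hC : IsCode N C) (hC' : IsCode N C') {s t : ℤ}
    (hs : -(2 * N) < s ∧ s < 2 * N)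
    (h : lf (codeProfile N C t) (codeProfile N C' (44 * N - 1 - s - t)) = 1) :
    (t ∈ C ∧ t + s ∈ C') ∨ (44 * N - 1 - s - t ∈ C' ∧ 44 * N - 1 - s - t + s ∈ C) := by
  rw [lf_eq_one_iff] at h
  simp only [codeProfile_eq_zero_iff, codeProfile_eq_one_iff] at h
  rcases h with ⟨ht, -, hpos⟩ | ⟨⟨-, hpos⟩, ht⟩
  · have := hC.bounds ht
    have hmatch := (hpos.resolve_left (by omega)).resolve_left (by omega)
    rw [show 44 * (N : ℤ) - 1 - (44 * N - 1 - s - t) = t + s by ring] at hmatch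
    exact Or.inl ⟨ht, hmatch⟩
  · have := hC'.bounds ht
    have hmatch := (hpos.resolve_left (by omega)).resolve_left (by omega)
    rw [show 44 * (N : ℤ) - 1 - t = 44 * N - 1 - s - t + s by ring] at hmatch
    exact Or.inr ⟨ht, hmatch⟩

lemma codeProfile_eq_one_of_mem_run (hC : IsCode N C) {t : ℤ}
    (ht : t ∈ Finset.Ioo (24 * N : ℤ) (25 * N)) : codeProfile N C t = one := by
  rw [Finset.mem_Ioo] at ht
  refine codeProfile_eq_one_iff.2 ⟨fun hmem => ?_, Or.inr (Or.inl ht)⟩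
  have := hC.bounds hmem
  omega

lemma codeProfile_eq_one_of_reflect_mem_run (hC : IsCode N C) {s t : ℤ}
    (hs : -(2 * N) < s ∧ s < 2 * N)
    (ht : 44 * N - 1 - s - t ∈ Finset.Ioo (24 * N : ℤ) (25 * N)) : codeProfile N C t = one := by
  rw [Finset.mem_Ioo] at ht
  refine codeProfile_eq_one_iff.2 ⟨fun hmem => ?_, Or.inl (by omega)⟩
  have := hC.bounds hmem
  omega

lemma sum_lf_codeProfile_nonpos_of_near_center (hC : IsCode N C) (hC' : IsCode N C') {s : ℤ}
    (hs : -(2 * N) < s ∧ s < 2 * N) (h : s ≠ 0 ∨ C ≠ C') :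
    ∑ t ∈ Finset.Ico (0 : ℤ) (44 * N : ℕ),
      lf (codeProfile N C t) (codeProfile N C' (44 * N - 1 - s - t)) ≤ 0 := by
  set run := Finset.Ioo (24 * N : ℤ) (25 * N)
  refine sum_lf_nonpos_of_card_le
    (A := {t ∈ C | t + s ∈ C'} ∪ mirror (44 * N - 1 - s) {t ∈ C' | t + s ∈ C})
    (R := run ∪ mirror (44 * N - 1 - s) run) (fun t _ ht => ?_) (fun t ht => ?_) ?_
  · rw [Finset.mem_union, mem_mirror, Finset.mem_filter, Finset.mem_filter]
    exact code_match_of_lf_codeProfile_eq_one hC hC' hs ht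
  · rw [Finset.mem_union, mem_mirror] at ht
    refine ⟨?_, lf_eq_neg_one_iff.2 (Or.inr ?_)⟩
    · have := ht.imp Finset.mem_Ioo.1 Finset.mem_Ioo.1
      exact Finset.mem_Ico.2 (by omega)
    · rcases ht with ht | ht
      · exact ⟨codeProfile_eq_one_of_mem_run hC ht,
          codeProfile_eq_one_of_reflect_mem_run hC' hs (by rwa [sub_sub_cancel])⟩
      · exact ⟨codeProfile_eq_one_of_reflect_mem_run hC hs ht,
          codeProfile_eq_one_of_mem_run hC' ht⟩
  · have few_matches := hC.card_filter_add_mem_lt hC' h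
    have few_matches' := hC'.card_filter_add_mem_lt hC (h.imp_right Ne.symm)
    have hdisj : Disjoint run (mirror (44 * N - 1 - s) run) := by
      refine Finset.disjoint_left.2 fun t ht ht' => ?_
      rw [mem_mirror, Finset.mem_Ioo] at ht'
      rw [Finset.mem_Ioo] at ht
      omega
    refine (Finset.card_union_le _ _).trans ?_
    rw [Finset.card_union_of_disjoint hdisj, card_mirror, card_mirror, Int.card_Ioo]
    omega

lemma sum_lf_codeProfile_reflect_nonpos (hC : IsCode N C) (hC' : IsCode N C') {c : ℤ}
    (h : c ≠ 44 * N - 1 ∨ C ≠ C') :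
    ∑ t ∈ Finset.Ico (0 : ℤ) (44 * N : ℕ),
      lf (codeProfile N C t) (codeProfile N C' (c - t)) ≤ 0 := by
  by_cases hoverlap : 4 * N ≤ c + 1 ∧ c + 1 ≤ 40 * N
  · refine sum_lf_codeProfile_nonpos_of_overlap hC hC' (Equiv.subLeft c)
      (J := Finset.Ico (max 0 (c + 1 - 22 * N)) (min (22 * N) (c + 1))) (fun t ht => ?_) ?_
    · rw [Finset.mem_Ico] at ht
      simp only [Equiv.subLeft_apply]
      omega
    · rw [Int.card_Ico]
      omega
  by_cases hcenter : 42 * N - 1 < c ∧ c < 46 * N - 1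
  · obtain ⟨s, rfl⟩ : ∃ s, c = 44 * N - 1 - s := ⟨44 * N - 1 - c, by ring⟩
    exact sum_lf_codeProfile_nonpos_of_near_center hC hC' (by omega) (h.imp_left (by omega))
  · refine sum_lf_nonpos_of_card_le (A := ∅) (R := ∅) (fun t _ ht => ?_) (by simp) le_rfl
    have := bounds_of_lf_codeProfile_eq_one hC hC' ht
    omega

lemma lf_codeProfile_reflect_self_eq_one (hC : IsCode N C) {t : ℤ}
    (ht : t ∈ C ∨ 44 * N - 1 - t ∈ C) :
    lf (codeProfile N C t) (codeProfile N C (44 * N - 1 - t)) = 1 := by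
  rw [lf_eq_one_iff]
  simp only [codeProfile_eq_zero_iff, codeProfile_eq_one_iff, sub_sub_cancel]
  have not_both : ¬(t ∈ C ∧ 44 * N - 1 - t ∈ C) := fun ⟨h, h'⟩ => by
    have := hC.bounds h
    have := hC.bounds h'
    omega
  tauto

lemma run_of_lf_codeProfile_reflect_self_eq_neg_one (hC : IsCode N C) {t : ℤ}
    (h : lf (codeProfile N C t) (codeProfile N C (44 * N - 1 - t)) = -1) :
    t ∈ Finset.Ioo (24 * N : ℤ) (25 * N) ∨ 44 * N - 1 - t ∈ Finset.Ioo (24 * N : ℤ) (25 * N) := by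
  rw [lf_eq_neg_one_iff] at h
  simp only [codeProfile_eq_zero_iff, codeProfile_eq_one_iff, sub_sub_cancel] at h
  rw [Finset.mem_Ioo, Finset.mem_Ioo]
  rcases h with ⟨ht, ht'⟩ | ⟨⟨hnot, hpos⟩, ⟨hnot', hpos'⟩⟩
  · have := hC.bounds ht
    have := hC.bounds ht'
    omega
  · simp only [hnot, hnot', or_false] at hpos hpos'
    omega

lemma sum_lf_codeProfile_reflect_self_pos (hC : IsCode N C) :
    0 < ∑ t ∈ Finset.Ico (0 : ℤ) (44 * N : ℕ),
      lf (codeProfile N C t) (codeProfile N C (44 * N - 1 - t)) := by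
  set run := Finset.Ioo (24 * N : ℤ) (25 * N)
  refine sum_lf_pos_of_card_lt (A := C ∪ mirror (44 * N - 1) C)
    (R := run ∪ mirror (44 * N - 1) run) (fun t ht => ?_) (fun t _ ht => ?_) ?_
  · rw [Finset.mem_union, mem_mirror] at ht
    refine ⟨?_, lf_codeProfile_reflect_self_eq_one hC ht⟩
    have := ht.imp hC.bounds hC.bounds
    exact Finset.mem_Ico.2 (by omega)
  · rw [Finset.mem_union, mem_mirror]
    exact run_of_lf_codeProfile_reflect_self_eq_neg_one hC ht
  · have hdisj : Disjoint C (mirror (44 * N - 1) C) := by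
      refine Finset.disjoint_left.2 fun t ht ht' => ?_
      have := hC.bounds ht
      have := hC.bounds (mem_mirror.1 ht')
      omega
    have hN := hC.bounds hC.left_mem
    refine (Finset.card_union_le _ _).trans_lt ?_
    rw [Finset.card_union_of_disjoint hdisj, card_mirror, card_mirror, Int.card_Ioo, hC.card_eq]
    omega

lemma aligned_spell_codeProfile (hC : IsCode N C) (hC' : IsCode N C') :
    aligned (spell (44 * N) (codeProfile N C)) (spell (44 * N) (codeProfile N C')) :=
  aligned_spell (fun _ => codeProfile_eq_blank hC')
    (sum_lf_codeProfile_translate_nonpos hC hC')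
    fun _ hc => sum_lf_codeProfile_reflect_nonpos hC hC' (Or.inl (by simpa using hc))

lemma force_spell_codeProfile_reverse_pos_iff (hC : IsCode N C) (hC' : IsCode N C') :
    0 < force (spell (44 * N) (codeProfile N C)) (spell (44 * N) (codeProfile N C')).reverse ↔
      C = C' := by
  rw [reverse_spell, force_spell]
  push_cast
  constructor
  · contrapose!
    exact fun hne => sum_lf_codeProfile_reflect_nonpos hC hC' (Or.inr hne)
  · rintro rfl
    exact sum_lf_codeProfile_reflect_self_pos hC

end CodeProfile

lemma attEncodes_spell_codeProfile {N k : ℕ} {C : ℕ → Finset ℤ}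
    (hC : ∀ i ∈ Finset.Icc 1 k, IsCode N (C i)) (hinj : Set.InjOn C (Finset.Icc 1 k)) :
    attEncodes k (fun i => spell (44 * N) (codeProfile N (C i))) unsignedGlue := by
  refine ⟨fun i hi j hj => aligned_spell_codeProfile (hC i hi) (hC j hj), fun i hi j hj => ?_⟩
  rw [force_spell_codeProfile_reverse_pos_iff (hC i hi) (hC j hj), hinj.eq_iff hi hj, unsignedGlue]
  split_ifs with hij <;> simp [hij]

/-- The code in which each binary digit of `i` below `2 ^ n` selects one of two adjacent places to
the right of the common leftmost place. -/
def bitCode (n i : ℕ) : Finset ℤ :=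
  insert (13 * (n + 1 : ℕ) : ℤ) ((Finset.range n).image fun q : ℕ =>
    (13 * (n + 1 : ℕ) + 2 * q + 1 + (i.testBit q).toNat : ℤ))

lemma isCode_bitCode (n i : ℕ) : IsCode (n + 1) (bitCode n i) where
  subset_Ico t ht := by
    simp only [bitCode, Finset.mem_insert, Finset.mem_image, Finset.mem_range] at ht
    rw [Finset.mem_Ico]
    rcases ht with rfl | ⟨q, hq, rfl⟩
    · omega
    · have := (i.testBit q).toNat_le
      omega
  left_mem := Finset.mem_insert_self _ _
  card_eq := by
    rw [bitCode, Finset.card_insert_of_notMem, Finset.card_image_of_injOn, Finset.card_range]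
    · intro q _ q' _ heq
      have := (i.testBit q).toNat_le
      have := (i.testBit q').toNat_le
      dsimp only at heq
      omega
    · simp only [Finset.mem_image, not_exists, not_and]
      intro q _
      omega

lemma bitCode_injOn (n : ℕ) : Set.InjOn (bitCode n) (Set.Iio (2 ^ n)) := by
  intro i hi j hj heq
  refine Nat.eq_of_testBit_eq fun q => ?_
  by_cases hq : q < n
  · have hmem : (13 * (n + 1 : ℕ) + 2 * q + 1 + (i.testBit q).toNat : ℤ) ∈ bitCode n j :=
      heq ▸ Finset.mem_insert_of_mem
        (Finset.mem_image.2 ⟨q, Finset.mem_range.2 hq, rfl⟩)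
    simp only [bitCode, Finset.mem_insert, Finset.mem_image, Finset.mem_range] at hmem
    have hi_le := (i.testBit q).toNat_le
    rcases hmem with hleft | ⟨q', _, heq'⟩
    · omega
    · have hj_le := (j.testBit q').toNat_le
      obtain rfl : q' = q := by omega
      have htoNat : (i.testBit q').toNat = (j.testBit q').toNat := by omega
      exact Function.LeftInverse.injective Bool.ofNat_toNat htoNat
  · have hpow := Nat.pow_le_pow_right two_pos (not_lt.1 hq)
    rw [Nat.testBit_lt_two_pow (hi.trans_le hpow), Nat.testBit_lt_two_pow (hj.trans_le hpow)]

/-- There is a constant `c > 0` such that for every `k ≥ 2` there is a set of `k` dipole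
words of common length at most `c·log₂ k` that attractively encodes the canonical
unsigned `k`-glue function. -/
theorem stmt6 :
    ∃ c : ℝ, 0 < c ∧ ∀ k : ℕ, 2 ≤ k →
      ∃ (l : ℕ) (W : ℕ → List Dip),
        (l : ℝ) ≤ c * Real.logb 2 k ∧
        (∀ i ∈ Finset.Icc 1 k, (W i).length = l) ∧
        attEncodes k W unsignedGlue := by
  refine ⟨132, by norm_num, fun k hk => ?_⟩
  set n := Nat.log 2 k + 1
  refine ⟨44 * (n + 1), fun i => spell (44 * (n + 1)) (codeProfile (n + 1) (bitCode n i)), ?_,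
    fun i _ => length_spell _ _,
    attEncodes_spell_codeProfile (fun i _ => isCode_bitCode n i) ((bitCode_injOn n).mono ?_)⟩
  · have hlog_pos : 1 ≤ Nat.log 2 k := Nat.log_pos one_lt_two hk
    calc ((44 * (n + 1) : ℕ) : ℝ) ≤ (132 * Nat.log 2 k : ℕ) := by
          exact_mod_cast (by omega : 44 * (n + 1) ≤ 132 * Nat.log 2 k)
      _ = 132 * (Nat.log 2 k : ℝ) := by push_cast; rfl
      _ ≤ 132 * Real.logb 2 k := by
          gcongr
          exact_mod_cast Real.natLog_le_logb k 2
  · intro i hi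
    exact (Finset.mem_Icc.1 hi).2.trans_lt (Nat.lt_pow_succ_log_self one_lt_two k)
end
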